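/- arXiv:1506.07121 — 2 statements merged into one kernel-verified Lean document; each statement's English description precedes it below -/
import Mathlib

section
/- For every dimension m ≥ 1 and every natural number N ≥ 1 there exists ρ₁ > 0 with the following property: for every open ball B(c, a) ⊆ ℝ^m of radius a > 0 and every finite collection P₁, …, P_k (with k ≤ N) of affine subspaces of ℝ^m, each of dimension at most m − 1, there exists a point q with ‖q − c‖ < a and dist(q, P_j) > ρ₁·a for every j = 1, …, k. -/
/-!
Remove the subspaces one at a time while shrinking the ball by a factor `4` at each stage. A proper
affine subspace `P` has a unit normal `v`, and `⟪· - p, v⟫` is constant on `P`. Moving the centre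
`c` of a ball of radius `a` by `a / 2` along `v`, in the direction that points away from `P`, gives
a point at distance at least `a / 2` from `P`; the ball of radius `a / 4` about it stays inside the
original ball and at distance at least `a / 4` from `P` (`exists_center_away`). Iterating over `k`
subspaces yields a point at distance at least `a / 4 ^ k` from each, so `ρ₁ = 1 / 4 ^ (N + 1)` works.
-/

open scoped InnerProductSpace in
/-- A proper affine subspace can be avoided, with clearance `a / 4`, by a whole ball of radius
`a / 4` whose centre is within `a / 2` of `c`. -/
lemma exists_center_away {E : Type*} [NormedAddCommGroup E] [InnerProductSpace ℝ E]
    [FiniteDimensional ℝ E] (P : AffineSubspace ℝ E) (hne : (P : Set E).Nonempty)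
    (hP : P.direction ≠ ⊤) (c : E) (a : ℝ) (ha : 0 < a) :
    ∃ c' : E, ‖c' - c‖ ≤ a / 2 ∧
      ∀ q : E, ‖q - c'‖ < a / 4 → a / 4 ≤ Metric.infDist q (P : Set E) := by
  obtain ⟨w, hw, hw0⟩ : ∃ w ∈ P.directionᗮ, w ≠ 0 :=
    Submodule.exists_mem_ne_zero_of_ne_bot
      (fun h => hP ((Submodule.orthogonal_eq_bot_iff).1 h))
  obtain ⟨v, hv, hv1⟩ : ∃ v ∈ P.directionᗮ, ‖v‖ = 1 :=
    ⟨(‖w‖⁻¹ : ℝ) • w, Submodule.smul_mem _ _ hw, norm_smul_inv_norm (𝕜 := ℝ) hw0⟩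
  obtain ⟨p, hp⟩ := hne
  -- The sign of `s` is that of `⟪c - p, v⟫`, so that the shift by `s • v` leads away from `P`.
  obtain ⟨s, hs, hst⟩ : ∃ s : ℝ, |s| = a / 2 ∧ a / 2 ≤ |⟪c - p, v⟫_ℝ + s| := by
    rcases le_total 0 ⟪c - p, v⟫_ℝ with h | h
    · exact ⟨a / 2, abs_of_pos (by linarith), le_trans (by linarith) (le_abs_self _)⟩
    · exact ⟨-(a / 2), by rw [abs_neg, abs_of_pos (by linarith)],
        le_trans (by linarith) (neg_le_abs _)⟩
  refine ⟨c + s • v, by simp [norm_smul, hv1, hs], fun q hq => ?_⟩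
  refine (Metric.le_infDist ⟨p, hp⟩).2 fun y hy => ?_
  have hdir : ⟪p - y, v⟫_ℝ = 0 :=
    (Submodule.mem_orthogonal _ _).1 hv _ (AffineSubspace.vsub_mem_direction hp hy)
  have hvv : ⟪v, v⟫_ℝ = 1 := by rw [real_inner_self_eq_norm_sq, hv1, one_pow]
  have hdecomp : ⟪q - y, v⟫_ℝ = ⟪q - (c + s • v), v⟫_ℝ + (⟪c - p, v⟫_ℝ + s) := by
    have : q - y = (q - (c + s • v)) + (c - p) + s • v + (p - y) := by abel
    rw [this, inner_add_left, inner_add_left, inner_add_left, hdir, real_inner_smul_left, hvv]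
    ring
  have h1 : |⟪q - y, v⟫_ℝ| ≤ ‖q - y‖ := by
    simpa [hv1] using abs_real_inner_le_norm (q - y) v
  have h2 : |⟪q - (c + s • v), v⟫_ℝ| ≤ ‖q - (c + s • v)‖ := by
    simpa [hv1] using abs_real_inner_le_norm (q - (c + s • v)) v
  have h3 : |⟪c - p, v⟫_ℝ + s| ≤ |⟪q - y, v⟫_ℝ| + |⟪q - (c + s • v), v⟫_ℝ| := by
    rw [show ⟪c - p, v⟫_ℝ + s = ⟪q - y, v⟫_ℝ - ⟪q - (c + s • v), v⟫_ℝ by rw [hdecomp]; ring]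
    exact abs_sub _ _
  rw [dist_eq_norm]
  linarith

lemma exists_point_away_of_proper {E : Type*} [NormedAddCommGroup E] [InnerProductSpace ℝ E]
    [FiniteDimensional ℝ E] (k : ℕ) (P : Fin k → AffineSubspace ℝ E)
    (hne : ∀ j, (P j : Set E).Nonempty) (hP : ∀ j, (P j).direction ≠ ⊤)
    (c : E) (a : ℝ) (ha : 0 < a) :
    ∃ q : E, ‖q - c‖ < a ∧ ∀ j, a / 4 ^ k ≤ Metric.infDist q (P j : Set E) := by
  induction k generalizing c a with
  | zero => exact ⟨c, by simpa using ha, fun j => j.elim0⟩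
  | succ k ih =>
    obtain ⟨c', hc', hfar⟩ := exists_center_away (P 0) (hne 0) (hP 0) c a ha
    obtain ⟨q, hq, hqfar⟩ := ih (fun j => P j.succ) (fun j => hne _) (fun j => hP _)
      c' (a / 4) (by linarith)
    refine ⟨q, ?_, Fin.cases ?_ fun j => ?_⟩
    · have := norm_sub_le_norm_sub_add_norm_sub q c' c
      linarith
    · refine le_trans ?_ (hfar q hq)
      rw [pow_succ', ← div_div]
      exact div_le_self (by linarith) (one_le_pow₀ (by norm_num))
    · rw [pow_succ', ← div_div]
      exact hqfar j


/-- For every dimension `m ≥ 1` and every `N ≥ 1` there exists `ρ₁ > 0` with the following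
property: for every open ball `B(c, a) ⊆ ℝ^m` with `a > 0` and every finite collection
`P₁, …, P_k` (with `k ≤ N`) of (nonempty) affine subspaces of `ℝ^m` of dimension at most
`m - 1`, there is a point `q` with `‖q - c‖ < a` whose distance to each `P_j` exceeds `ρ₁·a`. -/
theorem exists_point_far_from_affine_subspaces (m N : ℕ) (hm : 1 ≤ m) (hN : 1 ≤ N) :
    ∃ ρ₁ : ℝ, 0 < ρ₁ ∧
      ∀ (c : EuclideanSpace ℝ (Fin m)) (a : ℝ), 0 < a →
        ∀ (k : ℕ), k ≤ N →
          ∀ P : Fin k → AffineSubspace ℝ (EuclideanSpace ℝ (Fin m)),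
            (∀ j, (P j : Set (EuclideanSpace ℝ (Fin m))).Nonempty) →
            (∀ j, Module.finrank ℝ (P j).direction ≤ m - 1) →
            ∃ q : EuclideanSpace ℝ (Fin m), ‖q - c‖ < a ∧
              ∀ j, ρ₁ * a < Metric.infDist q (P j : Set (EuclideanSpace ℝ (Fin m))) := by
  refine ⟨1 / 4 ^ (N + 1), by positivity, fun c a ha k hk P hne hdim => ?_⟩
  have hP : ∀ j, (P j).direction ≠ ⊤ := fun j h => by
    have := hdim j
    rw [h, finrank_top, finrank_euclideanSpace_fin] at this
    omega
  obtain ⟨q, hq, hfar⟩ := exists_point_away_of_proper k P hne hP c a ha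
  refine ⟨q, hq, fun j => lt_of_lt_of_le ?_ (hfar j)⟩
  rw [one_div_mul_eq_div]
  exact div_lt_div_of_pos_left ha (by positivity)
    (pow_lt_pow_right₀ (by norm_num) (by omega))
end

section
/- Let P* be an affine subspace of ℝ^m, let P be an affine subspace contained in P*, let Q be a nonempty compact subset of P*, and let p* ∈ ℝ^m be a point not in Q. Let Q* = ⋃_{q ∈ Q} [p*, q] be the join of p* and Q, where [p*, q] denotes the closed segment from p* to q. Then dist(Q*, P)·diam(Q*) ≥ dist(Q, P)·dist(p*, P*). -/
/-! For `q ∈ Q`, `y ∈ P` and `x ∈ [p*, q]`, write twice the area of the triangle `p* q y` in two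
ways. With base `[p*, q]` it is at most `‖x - y‖ * ‖p* - q‖`, because the height from `y` is the
distance from `y` to the line through `p*` and `q`. With base `[q, y]` it is at least
`‖q - y‖ * dist(p*, P*)`, because that line lies in `P*`. The resulting inequality is
`height_mul_base_le`. Finally `‖p* - q‖ ≤ diam(Q*)` and `dist(Q, P) ≤ ‖q - y‖`, and taking the
infimum over `x` and `y` gives the claim. -/


/-- The distance between two subsets of `ℝ^m`: `dist(S, T) = inf{‖s - t‖ : s ∈ S, t ∈ T}`
(with the convention `sInf ∅ = 0` for real sets). -/
noncomputable def setDist {m : ℕ} (S T : Set (EuclideanSpace ℝ (Fin m))) : ℝ :=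
  sInf (Set.image2 dist S T)

/-- The two area formulas for the triangle with vertices `0`, `a`, `b` compared: `h` is at most the
height over the side `b`, and `‖s • a - b‖` is at least the height over the side `a`. -/
lemma height_mul_base_le {E : Type*} [NormedAddCommGroup E] [InnerProductSpace ℝ E]
    (a b : E) (s h : ℝ) (hh : 0 ≤ h) (H : ∀ r : ℝ, h ≤ ‖a - r • b‖) :
    ‖b‖ * h ≤ ‖s • a - b‖ * ‖a‖ := by
  rcases eq_or_ne b 0 with rfl | hb
  · simp only [norm_zero, zero_mul]; positivity
  have hb' : ‖b‖ ≠ 0 := norm_ne_zero_iff.mpr hb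
  -- The foot of the perpendicular from `a` to the line spanned by `b`.
  have h1 := H (inner ℝ a b / ‖b‖ ^ 2)
  have e1 : ‖b‖ ^ 2 * ‖a - (inner ℝ a b / ‖b‖ ^ 2) • b‖ ^ 2
      = ‖a‖ ^ 2 * ‖b‖ ^ 2 - (inner ℝ a b) ^ 2 := by
    rw [norm_sub_sq_real, real_inner_smul_right, norm_smul, mul_pow, Real.norm_eq_abs, sq_abs]
    field_simp
    ring
  have e2 : ‖s • a - b‖ ^ 2 * ‖a‖ ^ 2
      = ‖a‖ ^ 2 * ‖b‖ ^ 2 - (inner ℝ a b) ^ 2 + (s * ‖a‖ ^ 2 - inner ℝ a b) ^ 2 := by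
    rw [norm_sub_sq_real, real_inner_smul_left, norm_smul, mul_pow, Real.norm_eq_abs, sq_abs]
    ring
  apply le_of_sq_le_sq _ (by positivity)
  have h2 : h ^ 2 ≤ ‖a - (inner ℝ a b / ‖b‖ ^ 2) • b‖ ^ 2 := by gcongr
  have h3 := mul_le_mul_of_nonneg_left h2 (sq_nonneg ‖b‖)
  rw [mul_pow, mul_pow, e2]
  nlinarith [sq_nonneg (s * ‖a‖ ^ 2 - inner ℝ a b)]

lemma setDist_nonneg {m : ℕ} (S T : Set (EuclideanSpace ℝ (Fin m))) : 0 ≤ setDist S T := by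
  apply Real.sInf_nonneg
  rintro _ ⟨x, -, y, -, rfl⟩
  exact dist_nonneg

lemma setDist_le_dist {m : ℕ} {S T : Set (EuclideanSpace ℝ (Fin m))}
    {x y : EuclideanSpace ℝ (Fin m)} (hx : x ∈ S) (hy : y ∈ T) : setDist S T ≤ dist x y := by
  refine csInf_le ⟨0, ?_⟩ ⟨x, hx, y, hy, rfl⟩
  rintro _ ⟨x, -, y, -, rfl⟩
  exact dist_nonneg

/-- Whitney's Lemma App. II 14b: let `P*` be an affine subspace of `ℝ^m`, `P ⊆ P*` an affine
subspace, `Q` a nonempty compact subset of `P*`, and `p* ∉ Q`.  Let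
`Q* = ⋃_{q ∈ Q} [p*, q]` be the join of `p*` and `Q`.  Then
`dist(Q*, P)·diam(Q*) ≥ dist(Q, P)·dist(p*, P*)`. -/
theorem join_dist_inequality (m : ℕ)
    (Pstar P : AffineSubspace ℝ (EuclideanSpace ℝ (Fin m)))
    (hP : (P : Set (EuclideanSpace ℝ (Fin m))).Nonempty)
    (hPstar : (Pstar : Set (EuclideanSpace ℝ (Fin m))).Nonempty)
    (hPP : P ≤ Pstar)
    (Q : Set (EuclideanSpace ℝ (Fin m))) (hQne : Q.Nonempty) (hQc : IsCompact Q)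
    (hQP : Q ⊆ (Pstar : Set (EuclideanSpace ℝ (Fin m))))
    (pstar : EuclideanSpace ℝ (Fin m)) (hpstar : pstar ∉ Q) :
    setDist Q (P : Set (EuclideanSpace ℝ (Fin m))) *
        Metric.infDist pstar (Pstar : Set (EuclideanSpace ℝ (Fin m))) ≤
      setDist (⋃ q ∈ Q, segment ℝ pstar q) (P : Set (EuclideanSpace ℝ (Fin m))) *
        Metric.diam (⋃ q ∈ Q, segment ℝ pstar q) := by
  set J := ⋃ q ∈ Q, segment ℝ pstar q with hJ
  have hbdd : Bornology.IsBounded J := by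
    refine (isBounded_convexHull.mpr (hQc.isBounded.insert pstar)).subset ?_
    refine Set.iUnion₂_subset fun q hq => ?_
    exact segment_subset_convexHull (Set.mem_insert _ _) (Set.mem_insert_of_mem _ hq)
  have hdiam : ∀ q ∈ Q, dist pstar q ≤ Metric.diam J := fun q hq =>
    Metric.dist_le_diam_of_mem hbdd
      (Set.mem_biUnion hq (left_mem_segment ℝ _ _)) (Set.mem_biUnion hq (right_mem_segment ℝ _ _))
  have hh : 0 ≤ Metric.infDist pstar (Pstar : Set (EuclideanSpace ℝ (Fin m))) :=
    Metric.infDist_nonneg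
  have key : ∀ x ∈ J, ∀ y ∈ P, setDist Q (P : Set (EuclideanSpace ℝ (Fin m))) *
      Metric.infDist pstar (Pstar : Set (EuclideanSpace ℝ (Fin m))) ≤
        dist x y * Metric.diam J := by
    intro x hx y hy
    obtain ⟨q, hq, hxq⟩ := Set.mem_iUnion₂.mp hx
    obtain ⟨s, t, -, -, hst, rfl⟩ := hxq
    have H : ∀ r : ℝ, Metric.infDist pstar (Pstar : Set (EuclideanSpace ℝ (Fin m))) ≤
        ‖(pstar - q) - r • (y - q)‖ := by
      intro r
      have hmem := AffineMap.lineMap_mem r (hQP hq) (hPP hy)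
      have := Metric.infDist_le_dist_of_mem (x := pstar) hmem
      rw [dist_eq_norm, AffineMap.lineMap_apply_module'] at this
      rwa [sub_sub, add_comm q]
    have h1 := height_mul_base_le (pstar - q) (y - q) s _ hh H
    have e : s • (pstar - q) - (y - q) = s • pstar + t • q - y := by
      rw [← eq_sub_iff_add_eq'] at hst
      subst hst
      module
    rw [e, ← dist_eq_norm, ← dist_eq_norm, ← dist_eq_norm, dist_comm y q] at h1
    calc _ ≤ dist q y * Metric.infDist pstar (Pstar : Set (EuclideanSpace ℝ (Fin m))) :=
          mul_le_mul_of_nonneg_right (setDist_le_dist hq hy) hh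
      _ ≤ _ := h1
      _ ≤ _ := mul_le_mul_of_nonneg_left (hdiam q hq) dist_nonneg
  obtain ⟨q, hq⟩ := hQne
  obtain ⟨y, hy⟩ := hP
  have hhD := (Metric.infDist_le_dist_of_mem (x := pstar) (hQP hq)).trans (hdiam q hq)
  -- A degenerate join of diameter `0` has to be separated, since the infimum is bounded below by
  -- dividing by the diameter.
  rcases (hh.trans hhD).eq_or_lt with h0 | hpos
  · rw [← h0] at hhD ⊢
    rw [le_antisymm hhD hh, mul_zero, mul_zero]
  · rw [← div_le_iff₀ hpos]
    refine le_csInf ⟨_, q, Set.mem_biUnion hq (right_mem_segment ℝ _ _), y, hy, rfl⟩ ?_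
    rintro _ ⟨x, hx, y, hy, rfl⟩
    rw [div_le_iff₀ hpos]
    exact key x hx y hy
end
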